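/- arXiv:1210.7182 — 4 statements merged into one kernel-verified Lean document; each statement's English description precedes it below -/
import Mathlib

section
/- Let ℓ be a prime number and r a natural number. Let s be a finite set and f : s → ℕ a function with Σ_{i∈s} f i = ℓ^r. Then ℓ does not divide the multinomial coefficient multinomial(s, f) if and only if there exists an index i ∈ s with f i = ℓ^r (so that f j = 0 for all j ≠ i); moreover, in that case multinomial(s, f) = 1. -/
section

variable {ι : Type*} {s : Finset ι} {i : ι}

theorem eq_sum_iff_forall_ne_eq_zero {M : Type*} [AddCommMonoid M] [IsLeftCancelAdd M]
    [PartialOrder M] [CanonicallyOrderedAdd M] {f : ι → M} (hi : i ∈ s) :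
    f i = ∑ j ∈ s, f j ↔ ∀ j ∈ s, j ≠ i → f j = 0 := by
  classical
  rw [← Finset.add_sum_erase s f hi, left_eq_add, Finset.sum_eq_zero_iff]
  simp only [Finset.mem_erase, and_imp]
  exact forall_congr' fun _ => forall_comm

theorem multinomial_eq_one_of_forall_ne_eq_zero {f : ι → ℕ}
    (h : ∀ j ∈ s, j ≠ i → f j = 0) : Nat.multinomial s f = 1 := by
  classical
  rw [← Nat.multinomial_single s i (f i)]
  refine Nat.multinomial_congr fun j hj => ?_
  obtain rfl | hji := eq_or_ne j i
  · rw [Pi.single_eq_same]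
  · rw [Pi.single_eq_of_ne hji, h j hj hji]

theorem choose_dvd_multinomial (hi : i ∈ s) (f : ι → ℕ) :
    (∑ j ∈ s, f j).choose (f i) ∣ Nat.multinomial s f := by
  classical
  rw [← Finset.insert_erase hi, Finset.sum_insert (s.notMem_erase i),
    Nat.multinomial_insert (s.notMem_erase i)]
  exact dvd_mul_right _ _

theorem eq_zero_or_eq_prime_pow_of_not_dvd_multinomial {p n : ℕ} (hp : p.Prime) {f : ι → ℕ}
    (hsum : ∑ j ∈ s, f j = p ^ n) (hdvd : ¬ p ∣ Nat.multinomial s f) (hi : i ∈ s) :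
    f i = 0 ∨ f i = p ^ n := by
  contrapose! hdvd
  calc p ∣ (p ^ n).choose (f i) := hp.dvd_choose_pow hdvd.1 hdvd.2
    _ ∣ Nat.multinomial s f := hsum ▸ choose_dvd_multinomial hi f

end

/-- For a prime `ℓ` and `f : ι → ℕ` with `∑ i ∈ s, f i = ℓ ^ r`, the multinomial
coefficient `multinomial s f` is prime to `ℓ` iff `f` is concentrated at a single
index `i ∈ s` with `f i = ℓ ^ r` (so `f j = 0` for all other `j ∈ s`), and in that
case the multinomial coefficient equals `1`. -/
theorem multinomial_not_dvd_iff_concentrated {ι : Type*} [DecidableEq ι]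
    {ℓ : ℕ} (hℓ : ℓ.Prime) (r : ℕ) (s : Finset ι) (f : ι → ℕ)
    (hsum : ∑ i ∈ s, f i = ℓ ^ r) :
    (¬ ℓ ∣ Nat.multinomial s f ↔
      ∃ i ∈ s, f i = ℓ ^ r ∧ ∀ j ∈ s, j ≠ i → f j = 0) ∧
    ((∃ i ∈ s, f i = ℓ ^ r) → Nat.multinomial s f = 1) := by
  have vanish_off {i : ι} (hi : i ∈ s) (hfi : f i = ℓ ^ r) : ∀ j ∈ s, j ≠ i → f j = 0 :=
    (eq_sum_iff_forall_ne_eq_zero hi).mp (hfi.trans hsum.symm)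
  refine ⟨⟨fun hdvd => ?_, ?_⟩, ?_⟩
  · have sum_ne_zero : ∑ i ∈ s, f i ≠ 0 := hsum ▸ pow_ne_zero r hℓ.ne_zero
    obtain ⟨i, hi, hfi_ne⟩ := Finset.exists_ne_zero_of_sum_ne_zero sum_ne_zero
    have hfi : f i = ℓ ^ r :=
      (eq_zero_or_eq_prime_pow_of_not_dvd_multinomial hℓ hsum hdvd hi).resolve_left hfi_ne
    exact ⟨i, hi, hfi, vanish_off hi hfi⟩
  · rintro ⟨i, -, -, hzero⟩
    rw [multinomial_eq_one_of_forall_ne_eq_zero hzero]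
    exact hℓ.not_dvd_one
  · rintro ⟨i, hi, hfi⟩
    exact multinomial_eq_one_of_forall_ne_eq_zero (vanish_off hi hfi)
end

section
/- Let R be a commutative ring, u : ℕ → Rˣ a sequence of units, and p : ℕ → MvPolynomial ℕ R a sequence of polynomials such that for every n the polynomial p n only involves the variables X m with m < n. Then the R-algebra endomorphism φ of MvPolynomial ℕ R determined by φ(X n) = (u n)·(X n) + p n is bijective, i.e., an R-algebra automorphism of MvPolynomial ℕ R. -/
open MvPolynomial

/-!
Precomposition with a triangular endomorphism `φ` of `R[X]` turns an algebra map `f : R[X] → A`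
with values `gᵢ = f (Xᵢ)` into the one with values `uᵢ gᵢ + pᵢ(g)`. Since `pᵢ(g)` only depends on
the earlier `gⱼ` and `uᵢ` is a unit, these values determine `g`, and may be prescribed arbitrarily,
by well-founded recursion. So `φ` induces a bijection on algebra maps into every `A`, and is
therefore an isomorphism.
-/

theorem existsUnique_forall_eq_of_wellFounded {ι : Sort*} {α : ι → Sort*} [∀ i, Nonempty (α i)]
    {r : ι → ι → Prop} (hr : WellFounded r) (F : ∀ i, (∀ j, α j) → α i)
    (hF : ∀ i g g', (∀ j, r j i → g j = g' j) → F i g = F i g') :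
    ∃! g : ∀ i, α i, ∀ i, g i = F i g := by
  classical
  let g : ∀ i, α i := hr.fix fun i rec ↦
    F i fun j ↦ if h : r j i then rec j h else Classical.arbitrary (α j)
  have hg (i : ι) : g i = F i g :=
    (hr.fix_eq _ i).trans <| hF i _ _ fun j hj ↦ dif_pos hj
  refine ⟨g, hg, fun g' hg' ↦ funext fun i ↦ ?_⟩
  induction i using hr.induction with
  | _ i ih => rw [hg' i, hg i, hF i g' g ih]

theorem bijective_of_precomp_surjective_of_precomp_injective {R A B : Type*} [CommSemiring R]
    [Semiring A] [Semiring B] [Algebra R A] [Algebra R B] (φ : A →ₐ[R] B)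
    (hsurj : Function.Surjective fun f : B →ₐ[R] A ↦ f.comp φ)
    (hinj : Function.Injective fun f : B →ₐ[R] B ↦ f.comp φ) :
    Function.Bijective φ := by
  obtain ⟨ψ, hψφ : ψ.comp φ = AlgHom.id R A⟩ := hsurj (AlgHom.id R A)
  have hφψ : φ.comp ψ = AlgHom.id R B := hinj <| by
    simp only [AlgHom.comp_assoc, hψφ, AlgHom.comp_id, AlgHom.id_comp]
  exact (AlgEquiv.ofAlgHom φ ψ hφψ hψφ).bijective

theorem aeval_congr_of_vars {σ R A : Type*} [CommSemiring R] [CommSemiring A] [Algebra R A]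
    {g g' : σ → A} {q : MvPolynomial σ R} (h : ∀ i ∈ q.vars, g i = g' i) :
    aeval g q = aeval g' q :=
  eval₂Hom_congr' rfl (fun i hi _ ↦ h i hi) rfl

section Triangular

variable {σ R : Type*} [CommRing R] {r : σ → σ → Prop} {p : σ → MvPolynomial σ R}

theorem existsUnique_smul_add_aeval_eq (hr : WellFounded r) (u : σ → Rˣ)
    (hp : ∀ i, ∀ j ∈ (p i).vars, r j i)
    {A : Type*} [CommRing A] [Algebra R A] (y : σ → A) :
    ∃! g : σ → A, ∀ i, (u i : R) • g i + aeval g (p i) = y i := by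
  have solve_diagonal (g : σ → A) (i : σ) :
      (u i : R) • g i + aeval g (p i) = y i ↔ g i = (u i)⁻¹ • (y i - aeval g (p i)) := by
    rw [← Units.smul_def, ← eq_sub_iff_add_eq, smul_eq_iff_eq_inv_smul]
  simp only [solve_diagonal]
  refine existsUnique_forall_eq_of_wellFounded hr
    (fun i g ↦ (u i)⁻¹ • (y i - aeval g (p i))) fun i g g' h ↦ ?_
  rw [aeval_congr_of_vars fun j hj ↦ h j (hp i j hj)]

theorem comp_triangular_aeval_bijective (hr : WellFounded r) (u : σ → Rˣ)
    (hp : ∀ i, ∀ j ∈ (p i).vars, r j i)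
    (A : Type*) [CommRing A] [Algebra R A] :
    Function.Bijective fun f : MvPolynomial σ R →ₐ[R] A ↦
      f.comp (aeval fun i ↦ (u i : R) • X i + p i) := by
  refine (Function.bijective_iff_existsUnique _).2 fun f ↦ ?_
  have aeval_comp_eq_iff (g : σ → A) :
      (aeval g).comp (aeval fun i ↦ (u i : R) • X i + p i) = f ↔
        ∀ i, (u i : R) • g i + aeval g (p i) = f (X i) :=
    ⟨fun h i ↦ by simpa using DFunLike.congr_fun h (X i),
      fun h ↦ algHom_ext fun i ↦ by simpa using h i⟩
  obtain ⟨g, hg, g_unique⟩ := existsUnique_smul_add_aeval_eq hr u hp fun i ↦ f (X i)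
  refine ⟨aeval g, (aeval_comp_eq_iff g).2 hg, fun f' hf' ↦ ?_⟩
  rw [aeval_unique f'] at hf' ⊢
  rw [g_unique _ ((aeval_comp_eq_iff _).1 hf')]

theorem triangular_aeval_bijective_general (hr : WellFounded r) (u : σ → Rˣ)
    (hp : ∀ i, ∀ j ∈ (p i).vars, r j i) :
    Function.Bijective (aeval fun i ↦ (u i : R) • X i + p i :
      MvPolynomial σ R →ₐ[R] MvPolynomial σ R) :=
  have h := comp_triangular_aeval_bijective hr u hp (MvPolynomial σ R)
  bijective_of_precomp_surjective_of_precomp_injective _ h.surjective h.injective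

end Triangular

/-- A triangular change of variables `X n ↦ uₙ • X n + pₙ`, where each `uₙ` is a
unit and `pₙ` only involves the variables `X m` with `m < n`, is an `R`-algebra
automorphism of the polynomial ring `R[X 0, X 1, X 2, …]`. -/
theorem triangular_aeval_bijective {R : Type*} [CommRing R]
    (u : ℕ → Rˣ) (p : ℕ → MvPolynomial ℕ R)
    (hp : ∀ n, (p n).vars ⊆ Finset.range n) :
    Function.Bijective
      (aeval (fun n => (u n : R) • X n + p n) :
        MvPolynomial ℕ R →ₐ[R] MvPolynomial ℕ R) :=
  triangular_aeval_bijective_general wellFounded_lt u fun n _ hm ↦ Finset.mem_range.1 (hp n hm)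
end

section
/- Let R be a commutative ring, u : ℕ → Rˣ a sequence of units, and p : ℕ → MvPolynomial ℕ R a sequence of polynomials such that for every n the polynomial p n only involves the variables X m with m < n and has zero constant coefficient. Set x n = (u n)·(X n) + p n. Then the ideal of MvPolynomial ℕ R generated by {x n : n ∈ ℕ} equals the ideal generated by all the variables {X n : n ∈ ℕ}; consequently the quotient of MvPolynomial ℕ R by the ideal (x n : n ∈ ℕ) is isomorphic to R as an R-algebra. -/
open MvPolynomial

/-!
Modulo a submodule containing the `b j` with `j < i`, the element `u i • b i + p i` is a unit
multiple of `b i`, so well-founded induction recovers every `b i`. For polynomials, the condition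
that `p i` lies in the span of the earlier variables says exactly that `p i` involves only those
variables and has no constant term.
-/

theorem span_range_smul_add_eq_of_mem_span_image_Iio {ι G A M : Type*} [Preorder ι]
    [WellFoundedLT ι] [Group G] [Ring A] [AddCommGroup M] [Module A M] [MulAction G M] [SMul G A]
    [IsScalarTower G A M] (u : ι → G) {b p : ι → M}
    (hp : ∀ i, p i ∈ Submodule.span A (b '' Set.Iio i)) :
    Submodule.span A (Set.range fun i ↦ u i • b i + p i) = Submodule.span A (Set.range b) := by
  apply le_antisymm <;> rw [Submodule.span_le, Set.range_subset_iff]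
  · intro i
    have hb : b i ∈ Submodule.span A (Set.range b) := Submodule.subset_span ⟨i, rfl⟩
    exact add_mem ((Submodule.smul_mem_iff' _ (u i)).mpr hb)
      (Submodule.span_mono (Set.image_subset_range b _) (hp i))
  · intro i
    induction i using WellFoundedLT.induction with
    | ind i ih =>
      set N := Submodule.span A (Set.range fun i ↦ u i • b i + p i)
      have hpN : p i ∈ N := Submodule.span_le.mpr (Set.image_subset_iff.mpr ih) (hp i)
      have hxN : u i • b i + p i ∈ N := Submodule.subset_span ⟨i, rfl⟩
      exact (Submodule.smul_mem_iff' N (u i)).mp ((N.add_mem_iff_left hpN).mp hxN)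

section Variables

variable {σ R : Type*}

theorem mem_span_X_image_iff_constantCoeff_eq_zero [CommSemiring R] {q : MvPolynomial σ R}
    {s : Set σ} (hs : ↑q.vars ⊆ s) :
    q ∈ Ideal.span (X '' s : Set (MvPolynomial σ R)) ↔ constantCoeff q = 0 := by
  rw [mem_ideal_span_X_image]
  constructor
  · intro h
    by_contra hq
    obtain ⟨i, -, hi⟩ := h 0 (mem_support_iff.mpr hq)
    exact hi rfl
  · intro hq m hm
    have hm0 : m ≠ 0 := by
      rintro rfl
      exact mem_support_iff.mp hm hq
    obtain ⟨i, hi⟩ := Finsupp.support_nonempty_iff.mpr hm0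
    exact ⟨i, hs ((mem_vars_iff_mem_support i).mpr ⟨m, hm, hi⟩), Finsupp.mem_support_iff.mp hi⟩

theorem mem_idealOfVars_iff_constantCoeff_eq_zero [CommSemiring R] {q : MvPolynomial σ R} :
    q ∈ idealOfVars σ R ↔ constantCoeff q = 0 := by
  rw [idealOfVars, ← Set.image_univ,
    mem_span_X_image_iff_constantCoeff_eq_zero (Set.subset_univ _)]

theorem idealOfVars_eq_ker_aeval_zero [CommSemiring R] :
    idealOfVars σ R = RingHom.ker (aeval (0 : σ → R)) := by
  ext q
  rw [mem_idealOfVars_iff_constantCoeff_eq_zero, RingHom.mem_ker, aeval_zero,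
    Algebra.algebraMap_self_apply]

variable [CommRing R]

variable (σ R) in
/-- The identification of the quotient of a polynomial ring by its augmentation ideal with the
coefficient ring, induced by evaluation at the origin. -/
noncomputable def quotientIdealOfVarsAlgEquiv :
    (MvPolynomial σ R ⧸ idealOfVars σ R) ≃ₐ[R] R :=
  (Ideal.quotientEquivAlgOfEq R idealOfVars_eq_ker_aeval_zero).trans
    (Ideal.quotientKerAlgEquivOfRightInverse (g := C) fun r ↦ aeval_C _ r)

theorem triangular_span_eq_span_X_and_quotient_iso_general [Preorder σ] [WellFoundedLT σ]
    (u : σ → Rˣ) (p : σ → MvPolynomial σ R) (hp : ∀ i, ↑(p i).vars ⊆ Set.Iio i)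
    (hp0 : ∀ i, constantCoeff (p i) = 0) :
    Ideal.span (Set.range fun i ↦ (u i : R) • X i + p i) = idealOfVars σ R ∧
    Nonempty ((MvPolynomial σ R ⧸ Ideal.span (Set.range fun i ↦ (u i : R) • X i + p i)) ≃ₐ[R] R) :=
  have hspan : Ideal.span (Set.range fun i ↦ (u i : R) • X i + p i) = idealOfVars σ R :=
    span_range_smul_add_eq_of_mem_span_image_Iio u fun i ↦
      (mem_span_X_image_iff_constantCoeff_eq_zero (hp i)).mpr (hp0 i)
  ⟨hspan, ⟨(Ideal.quotientEquivAlgOfEq R hspan).trans (quotientIdealOfVarsAlgEquiv σ R)⟩⟩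

end Variables

/-- If `x n = uₙ • X n + pₙ`, where each `uₙ` is a unit and `pₙ` only involves the
variables `X m` with `m < n` and has zero constant coefficient, then the ideal
generated by the `x n` equals the ideal generated by all the variables, and the
quotient of `R[X 0, X 1, …]` by it is isomorphic to `R` as an `R`-algebra. -/
theorem triangular_span_eq_span_X_and_quotient_iso {R : Type*} [CommRing R]
    (u : ℕ → Rˣ) (p : ℕ → MvPolynomial ℕ R)
    (hp : ∀ n, (p n).vars ⊆ Finset.range n)
    (hp0 : ∀ n, constantCoeff (p n) = 0) :
    Ideal.span (Set.range fun n => (u n : R) • X n + p n) =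
      Ideal.span (Set.range (X : ℕ → MvPolynomial ℕ R)) ∧
    Nonempty
      ((MvPolynomial ℕ R ⧸
          Ideal.span (Set.range fun n => (u n : R) • X n + p n)) ≃ₐ[R] R) :=
  triangular_span_eq_span_X_and_quotient_iso_general u p
    (fun n _ hm ↦ Finset.mem_range.mp (hp n hm)) hp0
end

section
/- Define a sequence of polynomials c : ℕ → P recursively by c 0 = 1 and c r = −ξ_r − Σ_{i=1}^{r−1} ξ_{r−i}^{ℓ^i} · (c i) for r ≥ 1, so that Σ_{i=0}^{r} ξ_{r−i}^{ℓ^i} · (c i) = 0 for all r ≥ 1. Then also Σ_{i=0}^{r} (c (r−i))^{ℓ^i} · ξ_i = 0 in P for all r ≥ 1. Equivalently, the 𝔽_ℓ-algebra endomorphism ι of P with ι(ξ_r) = c r is an antipode for the bialgebra (P, Δ, ε), i.e., mult ∘ (ι ⊗ id) ∘ Δ = η ∘ ε = mult ∘ (id ⊗ ι) ∘ Δ, making P a Hopf algebra over 𝔽_ℓ. -/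
/-!
Write `(a ⋆ b)ₙ = Σᵢ aₙ₋ᵢ ^ ℓ ^ i * bᵢ` for sequences in a commutative ring of characteristic `ℓ`,
and `1` for the sequence `(1, 0, 0, …)`.
Through `Δ`, this product describes the convolution of algebra homomorphisms out of `P`, so the two
antipode identities say `c ⋆ ξ = 1` and `ξ ⋆ c = 1`, while the recursion for `c` is `ξ ⋆ c = 1`.

Because the Frobenius is a ring endomorphism, sending `a` to the lower triangular matrix with
entries `aᵢ₋ⱼ ^ ℓ ^ j` turns `⋆` into matrix multiplication. Over a commutative ring a one-sided
inverse of a square matrix is two-sided, hence `ξ ⋆ c = 1` implies `c ⋆ ξ = 1`.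
-/

open MvPolynomial TensorProduct

/-- `P`, the polynomial part of the dual motivic Steenrod algebra at `ℓ`:
the polynomial ring over `𝔽_ℓ` in variables `ξ₁, ξ₂, ξ₃, …`. -/
abbrev MilnorP (ℓ : ℕ) : Type := MvPolynomial ℕ+ (ZMod ℓ)

/-- The element `ξ_r` of `P`, with the convention `ξ₀ = 1`. -/
noncomputable def milnorXi (ℓ : ℕ) (r : ℕ) : MilnorP ℓ :=
  if h : 0 < r then X (⟨r, h⟩ : ℕ+) else 1

/-- The Milnor comultiplication `Δ : P → P ⊗ P`, the `𝔽_ℓ`-algebra homomorphism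
determined on generators by `Δ(ξ_r) = Σ_{i=0}^{r} ξ_{r−i}^{ℓ^i} ⊗ ξ_i`. -/
noncomputable def milnorDelta (ℓ : ℕ) : MilnorP ℓ →ₐ[ZMod ℓ] MilnorP ℓ ⊗[ZMod ℓ] MilnorP ℓ :=
  aeval fun r : ℕ+ =>
    ∑ i ∈ Finset.range ((r : ℕ) + 1),
      ((milnorXi ℓ ((r : ℕ) - i)) ^ (ℓ ^ i)) ⊗ₜ[ZMod ℓ] (milnorXi ℓ i)

/-- The counit `ε : P → 𝔽_ℓ`, the algebra homomorphism with `ε(ξ_r) = 0` for `r ≥ 1`. -/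
noncomputable def milnorEps (ℓ : ℕ) : MilnorP ℓ →ₐ[ZMod ℓ] ZMod ℓ :=
  aeval fun _ : ℕ+ => 0

section TwistedConvolution

open Finset

variable {R : Type*} [Semiring R]

/-- The product of `a` and `b` regarded as skew power series `Σₙ Tⁿ aₙ`, where scalars move past
the indeterminate by `r T = T φ(r)`. For the Frobenius `φ` this is the product of sequences encoded
by the Milnor comultiplication. Its unit is `Pi.single 0 1`. -/
def twistedConvolution (φ : R →+* R) (a b : ℕ → R) (n : ℕ) : R :=
  ∑ i ∈ range (n + 1), (φ ^ i) (a (n - i)) * b i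

/-- The matrix, truncated to size `n`, of left multiplication by the skew power series with
coefficients `a`: lower triangular with `(i, j)` entry `φʲ(aᵢ₋ⱼ)`. -/
def twistedToeplitz (φ : R →+* R) (n : ℕ) (a : ℕ → R) : Matrix (Fin n) (Fin n) R :=
  Matrix.of fun i j => if j ≤ i then (φ ^ (j : ℕ)) (a (i - j)) else 0

theorem twistedConvolution_apply_of_pos (φ : R →+* R) {a b : ℕ → R} (ha : a 0 = 1) (hb : b 0 = 1)
    {n : ℕ} (hn : 0 < n) :
    twistedConvolution φ a b n = a n + ∑ i ∈ Ico 1 n, (φ ^ i) (a (n - i)) * b i + b n := by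
  rw [twistedConvolution, sum_range_succ, range_eq_Ico, sum_eq_sum_Ico_succ_bot hn]
  simp [ha, hb]

theorem twistedToeplitz_apply_zero (φ : R →+* R) (n : ℕ) (a : ℕ → R) (i : Fin (n + 1)) :
    twistedToeplitz φ (n + 1) a i 0 = a i := by
  simp [twistedToeplitz]

theorem twistedToeplitz_single (φ : R →+* R) (n : ℕ) :
    twistedToeplitz φ n (Pi.single 0 1) = 1 := by
  ext i j
  rcases lt_trichotomy i j with hij | rfl | hji
  · simp [twistedToeplitz, hij.not_ge, hij.ne]
  · simp [twistedToeplitz]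
  · have hsub : (i : ℕ) - j ≠ 0 := Nat.sub_ne_zero_of_lt hji
    simp [twistedToeplitz, hji.le, hji.ne', hsub]

theorem twistedToeplitz_mul (φ : R →+* R) (n : ℕ) (a b : ℕ → R) :
    twistedToeplitz φ n a * twistedToeplitz φ n b =
      twistedToeplitz φ n (twistedConvolution φ a b) := by
  ext i k
  let term (j : ℕ) : R := (φ ^ j) (a (i - j)) * (φ ^ (k : ℕ)) (b (j - k))
  have entry_eq_sum_Ico :
      (twistedToeplitz φ n a * twistedToeplitz φ n b) i k = ∑ j ∈ Ico (k : ℕ) (i + 1), term j := by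
    have filter_eq : {j ∈ range n | (k : ℕ) ≤ j ∧ j ≤ i} = Ico (k : ℕ) (i + 1) := by
      ext j
      simp only [mem_filter, mem_range, mem_Ico]
      omega
    rw [Matrix.mul_apply, ← filter_eq, sum_filter, ← Fin.sum_univ_eq_sum_range]
    refine sum_congr rfl fun j _ => ?_
    by_cases hkj : k ≤ j <;> by_cases hji : j ≤ i <;> simp [twistedToeplitz, term, hkj, hji]
  rw [entry_eq_sum_Ico]
  by_cases hki : k ≤ i
  · have term_add (m : ℕ) :
        term (k + m) = (φ ^ (k : ℕ)) ((φ ^ m) (a (i - k - m)) * b m) := by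
      simp [term, Function.iterate_add_apply, Nat.sub_sub]
    have hlen : (i : ℕ) + 1 - k = i - k + 1 := Nat.sub_add_comm hki
    simp only [sum_Ico_eq_sum_range, hlen, term_add, twistedToeplitz, twistedConvolution,
      Matrix.of_apply, if_pos hki, map_sum]
  · rw [Ico_eq_empty_of_le (Nat.succ_le_of_lt (not_le.mp hki))]
    simp [twistedToeplitz, hki]

theorem twistedConvolution_eq_single_comm [IsStablyFiniteRing R] {φ : R →+* R} {a b : ℕ → R} :
    twistedConvolution φ a b = Pi.single 0 1 ↔ twistedConvolution φ b a = Pi.single 0 1 := by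
  suffices comm : ∀ {a b : ℕ → R}, twistedConvolution φ a b = Pi.single 0 1 →
      twistedConvolution φ b a = Pi.single 0 1 from ⟨comm, comm⟩
  intro a b hab
  have matrix_eq (n : ℕ) :
      twistedToeplitz φ n (twistedConvolution φ b a) = twistedToeplitz φ n (Pi.single 0 1) := by
    rw [twistedToeplitz_single, ← twistedToeplitz_mul, mul_eq_one_comm, twistedToeplitz_mul, hab,
      twistedToeplitz_single]
  funext n
  simpa only [twistedToeplitz_apply_zero, Fin.val_last] using
    congrFun (congrFun (matrix_eq (n + 1)) (Fin.last n)) 0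

theorem twistedConvolution_frobenius {A : Type*} [CommSemiring A] (p : ℕ) [ExpChar A p]
    (a b : ℕ → A) (n : ℕ) :
    twistedConvolution (frobenius A p) a b n = ∑ i ∈ range (n + 1), a (n - i) ^ p ^ i * b i := by
  simp [twistedConvolution, RingHom.coe_pow, iterate_frobenius]

end TwistedConvolution

section Milnor

variable {ℓ : ℕ}

theorem milnorXi_zero : milnorXi ℓ 0 = 1 := by
  simp [milnorXi]

theorem milnorXi_coe (r : ℕ+) : milnorXi ℓ r = X r :=
  dif_pos r.pos

theorem aeval_milnorXi {A : Type*} [CommSemiring A] [Algebra (ZMod ℓ) A] {c : ℕ → A}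
    (hc : c 0 = 1) (r : ℕ) : aeval (fun s : ℕ+ => c s) (milnorXi ℓ r) = c r := by
  rcases r.eq_zero_or_pos with rfl | hr
  · simp [milnorXi_zero, hc]
  · lift r to ℕ+ using hr
    rw [milnorXi_coe, aeval_X]

theorem milnorEps_milnorXi (r : ℕ) :
    milnorEps ℓ (milnorXi ℓ r) = (Pi.single 0 1 : ℕ → ZMod ℓ) r := by
  rcases r.eq_zero_or_pos with rfl | hr
  · simp [milnorXi_zero]
  · lift r to ℕ+ using hr
    simp [milnorXi_coe, milnorEps]

theorem milnorDelta_milnorXi (r : ℕ) :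
    milnorDelta ℓ (milnorXi ℓ r) =
      ∑ i ∈ Finset.range (r + 1), (milnorXi ℓ (r - i) ^ ℓ ^ i) ⊗ₜ[ZMod ℓ] milnorXi ℓ i := by
  rcases r.eq_zero_or_pos with rfl | hr
  · simp [milnorXi_zero, Algebra.TensorProduct.one_def]
  · lift r to ℕ+ using hr
    rw [milnorXi_coe, milnorDelta, aeval_X]

variable {A : Type*} [CommSemiring A] [Algebra (ZMod ℓ) A] [ExpChar A ℓ]

theorem productMap_milnorDelta_milnorXi (f g : MilnorP ℓ →ₐ[ZMod ℓ] A) (r : ℕ) :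
    Algebra.TensorProduct.productMap f g (milnorDelta ℓ (milnorXi ℓ r)) =
      twistedConvolution (frobenius A ℓ) (f ∘ milnorXi ℓ) (g ∘ milnorXi ℓ) r := by
  simp [milnorDelta_milnorXi, twistedConvolution_frobenius]

theorem productMap_comp_milnorDelta_eq_iff (f g : MilnorP ℓ →ₐ[ZMod ℓ] A) :
    (Algebra.TensorProduct.productMap f g).comp (milnorDelta ℓ) =
        (Algebra.ofId (ZMod ℓ) A).comp (milnorEps ℓ) ↔
      twistedConvolution (frobenius A ℓ) (f ∘ milnorXi ℓ) (g ∘ milnorXi ℓ) = Pi.single 0 1 := by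
  have unit_milnorXi (r : ℕ) :
      Algebra.ofId (ZMod ℓ) A (milnorEps ℓ (milnorXi ℓ r)) = (Pi.single 0 1 : ℕ → A) r := by
    rw [milnorEps_milnorXi, Pi.single_apply, Pi.single_apply]
    split_ifs <;> simp
  constructor
  · intro h
    funext r
    rw [← productMap_milnorDelta_milnorXi, ← unit_milnorXi]
    exact DFunLike.congr_fun h (milnorXi ℓ r)
  · intro h
    refine algHom_ext fun r => ?_
    rw [← milnorXi_coe, AlgHom.comp_apply, AlgHom.comp_apply, productMap_milnorDelta_milnorXi, h,
      unit_milnorXi]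

theorem twistedConvolution_milnorXi_eq_single [Fact ℓ.Prime] {c : ℕ → MilnorP ℓ} (hc0 : c 0 = 1)
    (hcrec : ∀ r : ℕ, 1 ≤ r →
      c r = -milnorXi ℓ r - ∑ i ∈ Finset.Ico 1 r, milnorXi ℓ (r - i) ^ ℓ ^ i * c i) :
    twistedConvolution (frobenius (MilnorP ℓ) ℓ) (milnorXi ℓ) c = Pi.single 0 1 := by
  funext r
  rcases r.eq_zero_or_pos with rfl | hr
  · simp [twistedConvolution, milnorXi_zero, hc0]
  · rw [twistedConvolution_apply_of_pos _ milnorXi_zero hc0 hr, hcrec r hr,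
      Pi.single_eq_of_ne hr.ne']
    simp only [RingHom.coe_pow, iterate_frobenius]
    ring

end Milnor

/-- If `c : ℕ → P` satisfies `c 0 = 1` and the recursion
`c r = −ξ_r − Σ_{i=1}^{r−1} ξ_{r−i}^{ℓ^i}·(c i)` for `r ≥ 1` (equivalently,
`Σ_{i=0}^{r} ξ_{r−i}^{ℓ^i}·(c i) = 0` for `r ≥ 1`), then also
`Σ_{i=0}^{r} (c (r−i))^{ℓ^i}·ξ_i = 0` for all `r ≥ 1`; equivalently, the algebra
endomorphism `ι` of `P` with `ι(ξ_r) = c r` is an antipode for `(P, Δ, ε)`: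
`mult ∘ (ι ⊗ id) ∘ Δ = η ∘ ε = mult ∘ (id ⊗ ι) ∘ Δ`, making `P` a Hopf algebra. -/
theorem milnor_antipode (ℓ : ℕ) (hℓ : ℓ.Prime) (c : ℕ → MilnorP ℓ)
    (hc0 : c 0 = 1)
    (hcrec : ∀ r : ℕ, 1 ≤ r →
      c r = - milnorXi ℓ r -
        ∑ i ∈ Finset.Ico 1 r, ((milnorXi ℓ (r - i)) ^ (ℓ ^ i)) * c i) :
    (∀ r : ℕ, 1 ≤ r →
      ∑ i ∈ Finset.range (r + 1), ((c (r - i)) ^ (ℓ ^ i)) * milnorXi ℓ i = 0) ∧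
    ((Algebra.TensorProduct.lmul' (ZMod ℓ) (S := MilnorP ℓ)).comp
        ((Algebra.TensorProduct.map (aeval fun r : ℕ+ => c r)
          (AlgHom.id (ZMod ℓ) (MilnorP ℓ))).comp (milnorDelta ℓ)) =
      (Algebra.ofId (ZMod ℓ) (MilnorP ℓ)).comp (milnorEps ℓ)) ∧
    ((Algebra.TensorProduct.lmul' (ZMod ℓ) (S := MilnorP ℓ)).comp
        ((Algebra.TensorProduct.map (AlgHom.id (ZMod ℓ) (MilnorP ℓ))
          (aeval fun r : ℕ+ => c r)).comp (milnorDelta ℓ)) =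
      (Algebra.ofId (ZMod ℓ) (MilnorP ℓ)).comp (milnorEps ℓ)) := by
  have : Fact ℓ.Prime := ⟨hℓ⟩
  have hξc := twistedConvolution_milnorXi_eq_single hc0 hcrec
  have hcξ := twistedConvolution_eq_single_comm.mp hξc
  have hι : aeval (fun r : ℕ+ => c r) ∘ milnorXi ℓ = c := funext (aeval_milnorXi hc0)
  have hid : AlgHom.id (ZMod ℓ) (MilnorP ℓ) ∘ milnorXi ℓ = milnorXi ℓ := rfl
  simp only [← AlgHom.comp_assoc, ← Algebra.TensorProduct.productMap_eq_comp_map]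
  refine ⟨fun r hr => ?_, ?_, ?_⟩
  · rw [← twistedConvolution_frobenius, hcξ, Pi.single_eq_of_ne (Nat.ne_of_gt hr)]
  · rwa [productMap_comp_milnorDelta_eq_iff, hι, hid]
  · rwa [productMap_comp_milnorDelta_eq_iff, hι, hid]
end
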